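/- For any event structure E, the undirected Hasse diagram of its domain (D(E), ⊆) — the simple graph whose vertices are the configurations of E, two configurations being adjacent if and only if one is obtained from the other by adding a single event — is a median graph. -/

import Mathlib

/-- An event structure `(E, ≤, #)`. -/
structure EventStructure where
  E : Type
  le : E → E → Prop
  le_refl : ∀ e, le e e
  le_trans : ∀ e₁ e₂ e₃, le e₁ e₂ → le e₂ e₃ → le e₁ e₃
  le_antisymm : ∀ e₁ e₂, le e₁ e₂ → le e₂ e₁ → e₁ = e₂
  finite_below : ∀ e, {e' | le e' e}.Finite
  conflict : E → E → Prop
  conflict_irrefl : ∀ e, ¬ conflict e e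
  conflict_symm : ∀ e₁ e₂, conflict e₁ e₂ → conflict e₂ e₁
  conflict_hereditary : ∀ e₁ e₂ e₃, conflict e₁ e₂ → le e₂ e₃ → conflict e₁ e₃

/-- A configuration: a finite, downward-closed, conflict-free set of events. -/
def EventStructure.IsConfig (ES : EventStructure) (c : Set ES.E) : Prop :=
  c.Finite ∧ (∀ e ∈ c, ∀ e', ES.le e' e → e' ∈ c) ∧
    ∀ e ∈ c, ∀ e' ∈ c, ¬ ES.conflict e e'

/-- The configurations of an event structure. -/
def EventStructure.Config (ES : EventStructure) : Type :=
  {c : Set ES.E // ES.IsConfig c}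

/-- The undirected Hasse diagram of the domain `(D(E), ⊆)`: two configurations are
adjacent iff one is obtained from the other by adding a single event. -/
def domainGraph (ES : EventStructure) : SimpleGraph ES.Config where
  Adj c c' := (∃ e ∉ c.1, c'.1 = insert e c.1) ∨ (∃ e ∉ c'.1, c.1 = insert e c'.1)
  symm := by
    constructor
    intro c c' h
    rcases h with h | h
    · exact Or.inr h
    · exact Or.inl h
  loopless := by
    constructor
    intro c h
    rcases h with ⟨e, he, heq⟩ | ⟨e, he, heq⟩ <;>
      · apply he
        rw [heq]
        exact Set.mem_insert _ _

/-- The interval `I(u,v)` in a graph. -/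
def gInterval {V : Type} (G : SimpleGraph V) (u v : V) : Set V :=
  {w | G.dist u w + G.dist w v = G.dist u v}

/-- A median graph: a connected graph in which every triple of vertices has a
unique median. -/
def IsMedianGraph {V : Type} (G : SimpleGraph V) : Prop :=
  G.Connected ∧ ∀ x y z : V, ∃! m : V,
    m ∈ gInterval G x y ∧ m ∈ gInterval G y z ∧ m ∈ gInterval G z x


/-- Key identity for symmetric differences of finite sets. -/
theorem ncard_symmDiff_add {α : Type} (a m b : Set α) (ha : a.Finite) (hm : m.Finite)
    (hb : b.Finite) :
    (symmDiff a m).ncard + (symmDiff m b).ncard =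
      (symmDiff a b).ncard + 2 * (symmDiff a m ∩ symmDiff m b).ncard := by
  have h1 : (symmDiff a m).Finite := (ha.union hm).subset Set.symmDiff_subset_union
  have h2 : (symmDiff m b).Finite := (hm.union hb).subset Set.symmDiff_subset_union
  have h3 : (symmDiff a b).Finite := (ha.union hb).subset Set.symmDiff_subset_union
  have h4 := Set.ncard_union_add_ncard_inter _ _ h1 h2
  have h5 : symmDiff a m ∪ symmDiff m b = symmDiff a b ∪ (symmDiff a m ∩ symmDiff m b) := by
    ext e
    simp only [Set.mem_union, Set.mem_inter_iff, Set.mem_symmDiff]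
    tauto
  have h6 : Disjoint (symmDiff a b) (symmDiff a m ∩ symmDiff m b) := by
    rw [Set.disjoint_left]
    intro e
    simp only [Set.mem_inter_iff, Set.mem_symmDiff]
    tauto
  rw [h5, Set.ncard_union_eq h6 h3 (h1.inter_of_left _)] at h4
  omega

theorem ncard_symmDiff_between {α : Type} (a m b : Set α) (ha : a.Finite) (hm : m.Finite)
    (hb : b.Finite) :
    (symmDiff a m).ncard + (symmDiff m b).ncard = (symmDiff a b).ncard ↔
      ∀ e, (e ∈ a → e ∈ b → e ∈ m) ∧ (e ∈ m → e ∈ a ∨ e ∈ b) := by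
  have h1 : (symmDiff a m).Finite := (ha.union hm).subset Set.symmDiff_subset_union
  have h := ncard_symmDiff_add a m b ha hm hb
  have h0 := Set.ncard_eq_zero (h1.inter_of_left (symmDiff m b))
  have : (symmDiff a m).ncard + (symmDiff m b).ncard = (symmDiff a b).ncard ↔
      (symmDiff a m ∩ symmDiff m b).ncard = 0 := by omega
  rw [this, h0, Set.eq_empty_iff_forall_notMem]
  refine forall_congr' fun e => ?_
  simp only [Set.mem_inter_iff, Set.mem_symmDiff]
  tauto

theorem adj_ncard {ES : EventStructure} {c d : ES.Config} (h : (domainGraph ES).Adj c d) :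
    (symmDiff c.1 d.1).ncard = 1 := by
  rcases h with ⟨e, he, h⟩ | ⟨e, he, h⟩ <;> rw [h, Set.ncard_eq_one] <;> refine ⟨e, ?_⟩ <;>
    · ext x
      simp only [Set.mem_symmDiff, Set.mem_insert_iff, Set.mem_singleton_iff]
      by_cases hx : x = e
      · subst hx; tauto
      · tauto

theorem walk_length_ge {ES : EventStructure} {c d : ES.Config} (w : (domainGraph ES).Walk c d) :
    (symmDiff c.1 d.1).ncard ≤ w.length := by
  induction w with
  | nil => simp
  | @cons u v w h p ih =>
    have := adj_ncard h
    have h2 := ncard_symmDiff_add u.1 v.1 w.1 u.2.1 v.2.1 w.2.1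
    rw [SimpleGraph.Walk.length_cons]
    omega

/-- If `c ⊄ d`, one can remove an event of `c` not in `d`. -/
theorem exists_step {ES : EventStructure} (c d : ES.Config) (h : ¬ c.1 ⊆ d.1) :
    ∃ c' : ES.Config, (domainGraph ES).Adj c c' ∧
      (symmDiff c'.1 d.1).ncard + 1 = (symmDiff c.1 d.1).ncard := by
  letI : PartialOrder ES.E :=
    { le := ES.le, le_refl := ES.le_refl, le_trans := ES.le_trans, le_antisymm := ES.le_antisymm }
  obtain ⟨e0, h0, h0'⟩ := Set.not_subset.1 h
  have hfin : (c.1 \ d.1).Finite := c.2.1.subset Set.diff_subset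
  obtain ⟨e, he⟩ := hfin.exists_maximal ⟨e0, h0, h0'⟩
  have hec := he.1.1
  have hed := he.1.2
  let c' : ES.Config := ⟨c.1 \ {e}, c.2.1.subset Set.diff_subset, by
    rintro x ⟨hx, hxe⟩ y hyx
    refine ⟨c.2.2.1 x hx y hyx, ?_⟩
    rintro rfl
    have hxd : x ∉ d.1 := fun hxd => hed (d.2.2.1 x hxd _ hyx)
    exact hxe (ES.le_antisymm _ _ (he.2 ⟨hx, hxd⟩ hyx) hyx), 
    fun x hx y hy => c.2.2.2 x hx.1 y hy.1⟩
  have hadj : (domainGraph ES).Adj c c' := by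
    refine Or.inr ⟨e, fun h => h.2 rfl, ?_⟩
    change c.1 = insert e (c.1 \ {e})
    rw [Set.insert_diff_singleton, Set.insert_eq_of_mem hec]
  refine ⟨c', hadj, ?_⟩
  have h1 := adj_ncard hadj
  have h2 := (ncard_symmDiff_between c.1 c'.1 d.1 c.2.1 c'.2.1 d.2.1).2 (fun x =>
    ⟨fun hx hxd => ⟨hx, fun hxe => hed (hxe ▸ hxd)⟩, fun hx => Or.inl hx.1⟩)
  omega

theorem exists_walk {ES : EventStructure} (n : ℕ) : ∀ c d : ES.Config,
    (symmDiff c.1 d.1).ncard = n → ∃ w : (domainGraph ES).Walk c d, w.length = n := by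
  induction n with
  | zero =>
    intro c d h
    have hf : (symmDiff c.1 d.1).Finite := (c.2.1.union d.2.1).subset Set.symmDiff_subset_union
    rw [Set.ncard_eq_zero hf] at h
    have : c = d := Subtype.ext (symmDiff_eq_bot.1 h)
    subst this
    exact ⟨.nil, rfl⟩
  | succ n ih =>
    intro c d h
    by_cases hcd : c.1 ⊆ d.1
    · by_cases hdc : d.1 ⊆ c.1
      · rw [Set.Subset.antisymm hcd hdc] at h
        simp at h
      · obtain ⟨d', ha, hn⟩ := exists_step d c hdc
        rw [symmDiff_comm d.1, h] at hn
        obtain ⟨w, hw⟩ := ih d' c (by omega)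
        refine ⟨(SimpleGraph.Walk.cons ha w).reverse, ?_⟩
        rw [SimpleGraph.Walk.length_reverse, SimpleGraph.Walk.length_cons, hw]
    · obtain ⟨c', ha, hn⟩ := exists_step c d hcd
      obtain ⟨w, hw⟩ := ih c' d (by omega)
      refine ⟨SimpleGraph.Walk.cons ha w, ?_⟩
      rw [SimpleGraph.Walk.length_cons, hw]

theorem domainGraph_connected (ES : EventStructure) : (domainGraph ES).Connected := by
  haveI : Nonempty ES.Config :=
    ⟨⟨∅, Set.finite_empty, fun _ h => h.elim, fun _ h => h.elim⟩⟩
  refine ⟨fun c d => ?_⟩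
  obtain ⟨w, -⟩ := exists_walk _ c d rfl
  exact ⟨w⟩

theorem domainGraph_dist {ES : EventStructure} (c d : ES.Config) :
    (domainGraph ES).dist c d = (symmDiff c.1 d.1).ncard := by
  apply le_antisymm
  · obtain ⟨w, hw⟩ := exists_walk _ c d rfl
    exact hw ▸ SimpleGraph.dist_le w
  · obtain ⟨w, hw⟩ := (domainGraph_connected ES).exists_walk_length_eq_dist c d
    exact hw ▸ walk_length_ge w

theorem mem_gInterval_domainGraph {ES : EventStructure} (c d m : ES.Config) :
    m ∈ gInterval (domainGraph ES) c d ↔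
      ∀ e, (e ∈ c.1 → e ∈ d.1 → e ∈ m.1) ∧ (e ∈ m.1 → e ∈ c.1 ∨ e ∈ d.1) := by
  rw [← ncard_symmDiff_between c.1 m.1 d.1 c.2.1 m.2.1 d.2.1]
  simp only [gInterval, Set.mem_setOf_eq, domainGraph_dist]

/-- The undirected Hasse diagram of the domain of any event structure is a median
graph. -/
theorem domainGraph_isMedian (ES : EventStructure) :
    IsMedianGraph (domainGraph ES) := by
  refine ⟨domainGraph_connected ES, fun x y z => ?_⟩
  simp only [mem_gInterval_domainGraph]
  refine ⟨⟨{e | (e ∈ x.1 ∧ e ∈ y.1) ∨ (e ∈ y.1 ∧ e ∈ z.1) ∨ (e ∈ z.1 ∧ e ∈ x.1)}, ?_, ?_, ?_⟩,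
    ?_, ?_⟩
  · refine ((x.2.1.union y.2.1).union z.2.1).subset fun e he => ?_
    simp only [Set.mem_setOf_eq] at he
    simp only [Set.mem_union]
    tauto
  · intro e he e' hle
    have hx := fun h => x.2.2.1 e h e' hle
    have hy := fun h => y.2.2.1 e h e' hle
    have hz := fun h => z.2.2.1 e h e' hle
    simp only [Set.mem_setOf_eq] at he ⊢
    tauto
  · intro e he e' he'
    have hx := fun h h' => x.2.2.2 e h e' h'
    have hy := fun h h' => y.2.2.2 e h e' h'
    have hz := fun h h' => z.2.2.2 e h e' h'
    simp only [Set.mem_setOf_eq] at he he'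
    tauto
  · simp only [Set.mem_setOf_eq]
    refine ⟨fun e => ?_, fun e => ?_, fun e => ?_⟩ <;> tauto
  · rintro m ⟨h1, h2, h3⟩
    refine Subtype.ext (Set.ext fun e => ?_)
    have h1 := h1 e
    have h2 := h2 e
    have h3 := h3 e
    simp only [Set.mem_setOf_eq]
    tauto
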